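/- Under the genericity assumption, for every integer n ≥ 0, every r ∈ ℤ, and every z ∈ ℂ, the following two-term relations linking different offsets hold: P_n(z;r) = P_n(z;r+2) + (h_n^{(r)}/h_{n−1}^{(r+2)})·P_{n−1}(z;r+2) for n ≥ 1, and Q_n(z;r) = Q_n(z;r−1) + (h_n^{(r)}/h_{n−1}^{(r−1)})·Q_{n−1}(z;r−1) for n ≥ 1; and under the j−2k genericity assumption, for every s ∈ ℤ and n ≥ 1: R_n(z;s) = R_n(z;s+1) + (g_n^{(s)}/g_{n−1}^{(s+1)})·R_{n−1}(z;s+1), and S_n(z;s) = S_n(z;s−2) + (g_n^{(s)}/g_{n−1}^{(s−2)})·S_{n−1}(z;s−2). -/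

import Mathlib

/-!
All four relations are one instance of the three-term Plücker relation. Let `a, b, x, e` be row
vectors and `A` a block of rows filling up a square matrix, where `a, A, b` are consecutive moment
rows, `x = (1, z, z², …)` and `e` is the last unit vector. Then
`[a A x] [A b e] - [A b x] [a A e] = [a A b] [A x e]`.
After expanding the determinants with last row `e`, the six brackets are the numerators and
denominators of the polynomials at the two offsets, because shifting the offset amounts to dropping
the first moment row. For `P` and `R` the moment rows are the rows of the defining determinants,
for `Q` and `S` they are the columns.

The Plücker relation (`plucker_rows`) is linear in `x` and holds trivially when `x` is one of the
rows of `[A b e]`. Genericity says that `[A b e]` is nonzero, so these rows span and the relation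
holds for all `x`.
-/

/-- The `2j-k` determinant `D_n^{(r)} := det_{0≤j,k≤n-1} (w (r+2j-k))`, with `D_0^{(r)} = 1`. -/
noncomputable def Ddet (w : ℤ → ℂ) (n : ℕ) (r : ℤ) : ℂ :=
  Matrix.det (fun j k : Fin n => w (r + 2 * ((j : ℕ) : ℤ) - ((k : ℕ) : ℤ)))

/-- The monic `2j-k` bi-orthogonal polynomial of the first kind, `P_n(z;r)`. -/
noncomputable def Ppoly (w : ℤ → ℂ) (n : ℕ) (r : ℤ) (z : ℂ) : ℂ :=
  Matrix.det (fun j k : Fin (n + 1) =>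
    if (j : ℕ) < n then w (r + 2 * ((j : ℕ) : ℤ) - ((k : ℕ) : ℤ)) else z ^ (k : ℕ)) /
    Ddet w n r

/-- The monic `2j-k` bi-orthogonal polynomial of the second kind, `Q_n(z;r)`. -/
noncomputable def Qpoly (w : ℤ → ℂ) (n : ℕ) (r : ℤ) (z : ℂ) : ℂ :=
  Matrix.det (fun j k : Fin (n + 1) =>
    if (k : ℕ) < n then w (r + 2 * ((j : ℕ) : ℤ) - ((k : ℕ) : ℤ)) else z ^ (j : ℕ)) /
    Ddet w n r

/-- The reciprocal polynomial `Q*_n(z;r) = zⁿ·Q_n(1/z;r)`: the last column `z^j` of the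
determinant defining `Q_n` is replaced by `z^(n-j)`. -/
noncomputable def Qstar (w : ℤ → ℂ) (n : ℕ) (r : ℤ) (z : ℂ) : ℂ :=
  Matrix.det (fun j k : Fin (n + 1) =>
    if (k : ℕ) < n then w (r + 2 * ((j : ℕ) : ℤ) - ((k : ℕ) : ℤ)) else z ^ (n - (j : ℕ))) /
    Ddet w n r

/-- The norm `h_n^{(r)} = D_{n+1}^{(r)}/D_n^{(r)}`. -/
noncomputable def hnorm (w : ℤ → ℂ) (n : ℕ) (r : ℤ) : ℂ := Ddet w (n + 1) r / Ddet w n r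

/-- The recurrence coefficient `δ_n^{(r)} = -h_n^{(r-1)}/h_n^{(r)}`. -/
noncomputable def δc (w : ℤ → ℂ) (n : ℕ) (r : ℤ) : ℂ := -hnorm w n (r - 1) / hnorm w n r

/-- The recurrence coefficient `η_n^{(r)} = D_n^{(r+2)}D_{n+1}^{(r-1)}/(D_{n+1}^{(r)}D_n^{(r+1)})`. -/
noncomputable def ηc (w : ℤ → ℂ) (n : ℕ) (r : ℤ) : ℂ :=
  Ddet w n (r + 2) * Ddet w (n + 1) (r - 1) / (Ddet w (n + 1) r * Ddet w n (r + 1))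

/-- The recurrence coefficient `β_n^{(r)} = -h_n^{(r+2)}/h_n^{(r)}`. -/
noncomputable def βc (w : ℤ → ℂ) (n : ℕ) (r : ℤ) : ℂ := -hnorm w n (r + 2) / hnorm w n r

/-- The recurrence coefficient `α_n^{(r)} = D_n^{(r-1)}D_{n+1}^{(r+2)}/(D_{n+1}^{(r)}D_n^{(r+1)})`. -/
noncomputable def αc (w : ℤ → ℂ) (n : ℕ) (r : ℤ) : ℂ :=
  Ddet w n (r - 1) * Ddet w (n + 1) (r + 2) / (Ddet w (n + 1) r * Ddet w n (r + 1))

/-- The `j-2k` determinant `E_n^{(s)} := det_{0≤j,k≤n-1} (w (s+j-2k))`, with `E_0^{(s)} = 1`. -/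
noncomputable def Edet (w : ℤ → ℂ) (n : ℕ) (s : ℤ) : ℂ :=
  Matrix.det (fun j k : Fin n => w (s + ((j : ℕ) : ℤ) - 2 * ((k : ℕ) : ℤ)))

/-- The monic `j-2k` bi-orthogonal polynomial of the first kind, `R_n(z;s)`. -/
noncomputable def Rpoly (w : ℤ → ℂ) (n : ℕ) (s : ℤ) (z : ℂ) : ℂ :=
  Matrix.det (fun j k : Fin (n + 1) =>
    if (j : ℕ) < n then w (s + ((j : ℕ) : ℤ) - 2 * ((k : ℕ) : ℤ)) else z ^ (k : ℕ)) /
    Edet w n s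

/-- The monic `j-2k` bi-orthogonal polynomial of the second kind, `S_n(z;s)`. -/
noncomputable def Spoly (w : ℤ → ℂ) (n : ℕ) (s : ℤ) (z : ℂ) : ℂ :=
  Matrix.det (fun j k : Fin (n + 1) =>
    if (k : ℕ) < n then w (s + ((j : ℕ) : ℤ) - 2 * ((k : ℕ) : ℤ)) else z ^ (j : ℕ)) /
    Edet w n s

/-- The reciprocal polynomial `S*_n(z;s) = zⁿ·S_n(1/z;s)`: the last column `z^j` of the
determinant defining `S_n` is replaced by `z^(n-j)`. -/
noncomputable def Sstar (w : ℤ → ℂ) (n : ℕ) (s : ℤ) (z : ℂ) : ℂ :=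
  Matrix.det (fun j k : Fin (n + 1) =>
    if (k : ℕ) < n then w (s + ((j : ℕ) : ℤ) - 2 * ((k : ℕ) : ℤ)) else z ^ (n - (j : ℕ))) /
    Edet w n s

/-- The norm `g_n^{(s)} = E_{n+1}^{(s)}/E_n^{(s)}`. -/
noncomputable def gnorm (w : ℤ → ℂ) (n : ℕ) (s : ℤ) : ℂ := Edet w (n + 1) s / Edet w n s

/-- The recurrence coefficient `κ_n^{(s)} = -g_n^{(s-2)}/g_n^{(s)}`. -/
noncomputable def κc (w : ℤ → ℂ) (n : ℕ) (s : ℤ) : ℂ := -gnorm w n (s - 2) / gnorm w n s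

/-- The recurrence coefficient `ρ_n^{(s)} = E_n^{(s+1)}E_{n+1}^{(s-2)}/(E_{n+1}^{(s)}E_n^{(s-1)})`. -/
noncomputable def ρc (w : ℤ → ℂ) (n : ℕ) (s : ℤ) : ℂ :=
  Edet w n (s + 1) * Edet w (n + 1) (s - 2) / (Edet w (n + 1) s * Edet w n (s - 1))

/-- The recurrence coefficient `γ_n^{(s)} = -g_n^{(s+1)}/g_n^{(s)}`. -/
noncomputable def γc (w : ℤ → ℂ) (n : ℕ) (s : ℤ) : ℂ := -gnorm w n (s + 1) / gnorm w n s

/-- The recurrence coefficient `θ_n^{(s)} = E_n^{(s-2)}E_{n+1}^{(s+1)}/(E_{n+1}^{(s)}E_n^{(s-1)})`. -/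
noncomputable def θc (w : ℤ → ℂ) (n : ℕ) (s : ℤ) : ℂ :=
  Edet w n (s - 2) * Edet w (n + 1) (s + 1) / (Edet w (n + 1) s * Edet w n (s - 1))

/-- Determinant of the first `n` rows of the array `f`, truncated to `n` columns. -/
noncomputable def momentDet (f : ℕ → ℕ → ℂ) (n : ℕ) : ℂ :=
  Matrix.det (fun j k : Fin n => f j k)

/-- Determinant of the first `n` rows of the array `f` followed by the row `y`, all truncated to
`n + 1` columns. -/
noncomputable def borderedDet (f : ℕ → ℕ → ℂ) (y : ℕ → ℂ) (n : ℕ) : ℂ :=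
  Matrix.det (fun j k : Fin (n + 1) => if (j : ℕ) < n then f j k else y k)

/-- Replacing the last row by the last unit vector gives the leading principal minor. -/
theorem det_updateRow_last_single {n : ℕ} (M : Matrix (Fin (n + 1)) (Fin (n + 1)) ℂ) :
    (M.updateRow (Fin.last n) (Pi.single (Fin.last n) 1)).det =
      (M.submatrix Fin.castSucc Fin.castSucc).det := by
  rw [← Matrix.adjugate_apply, Matrix.adjugate_fin_succ_eq_det_submatrix]
  simp [← two_mul]

theorem det_updateRow_last_single_eq_momentDet (f : ℕ → ℕ → ℂ) (n : ℕ) :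
    (Matrix.updateRow (Matrix.of fun j k : Fin (n + 1) => f j k)
      (Fin.last n) (Pi.single (Fin.last n) 1)).det = momentDet f n := by
  rw [det_updateRow_last_single]
  rfl

theorem det_updateRow_last_eq_borderedDet (f : ℕ → ℕ → ℂ) (y : ℕ → ℂ) (n : ℕ) :
    (Matrix.updateRow (Matrix.of fun j k : Fin (n + 1) => f j k) (Fin.last n) (fun k => y k)).det =
      borderedDet f y n := by
  unfold borderedDet
  congr 1
  ext j k
  refine Fin.lastCases ?_ (fun i => ?_) j
  · simp
  · rw [Matrix.updateRow_ne (Fin.castSucc_lt_last i).ne]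
    simp

theorem det_updateRow_eq_zero {n : ℕ} (M : Matrix (Fin n) (Fin n) ℂ) {i j : Fin n} (hij : j ≠ i)
    {x : Fin n → ℂ} (hx : M j = x) : (M.updateRow i x).det = 0 :=
  Matrix.det_zero_of_row_eq hij (by rw [Matrix.updateRow_self, Matrix.updateRow_ne hij, hx])

/-- Three-term Plücker relation. The matrix `M₁` has rows `a, A, b`, the matrix `M₂` has rows
`A, b` and an irrelevant last row, and `e` is an arbitrary row. -/
theorem plucker_rows {n : ℕ} (M₁ M₂ : Matrix (Fin (n + 2)) (Fin (n + 2)) ℂ)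
    (hM : ∀ i : Fin (n + 1), M₂ i.castSucc = M₁ i.succ) (e x : Fin (n + 2) → ℂ)
    (h : (M₂.updateRow (Fin.last _) e).det ≠ 0) :
    (M₁.updateRow (Fin.last _) x).det * (M₂.updateRow (Fin.last _) e).det -
      (M₂.updateRow (Fin.last _) x).det * (M₁.updateRow (Fin.last _) e).det =
    M₁.det *
      ((M₂.updateRow (Fin.last _) e).updateRow (Fin.last n).castSucc x).det := by
  set M₃ := M₂.updateRow (Fin.last _) e with hM₃
  -- `L M i y` is the determinant of `M` with row `i` replaced by `y`.
  let L (M : Matrix (Fin (n + 2)) (Fin (n + 2)) ℂ) (i : Fin (n + 2)) :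
      (Fin (n + 2) → ℂ) →ₗ[ℂ] ℂ :=
    (Matrix.detRowAlternating (n := Fin (n + 2)) (R := ℂ)).toMultilinearMap.toLinearMap M i
  -- `φ x` is the difference of the two sides.
  let φ : (Fin (n + 2) → ℂ) →ₗ[ℂ] ℂ :=
    M₃.det • L M₁ (Fin.last _) - (M₁.updateRow (Fin.last _) e).det • L M₂ (Fin.last _) -
      M₁.det • L M₃ (Fin.last n).castSucc
  have hφ : ∀ y, φ y = M₃.det * (M₁.updateRow (Fin.last _) y).det -
      (M₁.updateRow (Fin.last _) e).det * (M₂.updateRow (Fin.last _) y).det -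
      M₁.det * (M₃.updateRow (Fin.last n).castSucc y).det := fun _ => rfl
  have hrow : ∀ i : Fin (n + 1), M₃ i.castSucc = M₁ i.succ := fun i => by
    rw [hM₃, Matrix.updateRow_ne (Fin.castSucc_lt_last i).ne, hM]
  have hlast : M₃ (Fin.last _) = e := by rw [hM₃, Matrix.updateRow_self]
  have hne : ∀ i : Fin n, i.castSucc.castSucc ≠ (Fin.last n).castSucc := fun i hi =>
    (Fin.castSucc_lt_last i).ne (Fin.castSucc_injective _ hi)
  have hzero : ∀ i, φ (M₃ i) = 0 := by
    intro i
    refine Fin.lastCases ?_ (fun i => ?_) i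
    · rw [hφ, hlast, det_updateRow_eq_zero M₃ (Fin.castSucc_lt_last _).ne' hlast, ← hM₃]
      ring
    · have h2 : (M₂.updateRow (Fin.last _) (M₃ i.castSucc)).det = 0 :=
        det_updateRow_eq_zero M₂ (Fin.castSucc_lt_last i).ne ((hM i).trans (hrow i).symm)
      rw [hφ, h2]
      refine Fin.lastCases ?_ (fun i => ?_) i
      · have h1 : M₁.updateRow (Fin.last _) (M₃ (Fin.last n).castSucc) = M₁ := by
          rw [hrow, Fin.succ_last, Matrix.updateRow_eq_self]
        rw [h1, Matrix.updateRow_eq_self]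
        ring
      · have hs : i.castSucc.succ ≠ Fin.last (n + 1) := by
          rw [Fin.succ_castSucc]; exact (Fin.castSucc_lt_last _).ne
        rw [det_updateRow_eq_zero M₁ hs (hrow _).symm, det_updateRow_eq_zero M₃ (hne i) rfl]
        ring
  -- The rows of the invertible matrix `M₃` span, so `φ` vanishes identically.
  have hc : (fun k => φ (Pi.single k 1)) = 0 := by
    refine Matrix.eq_zero_of_mulVec_eq_zero h (funext fun i => ?_)
    rw [Pi.zero_apply, ← hzero i, LinearMap.pi_apply_eq_sum_univ φ (M₃ i)]
    simp only [Matrix.mulVec, dotProduct, smul_eq_mul, ← Pi.single_apply]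
    refine Finset.sum_congr rfl fun k _ => ?_
    congr 2
    ext l
    simp [Pi.single_apply, eq_comm]
  have hx : φ x = 0 := by
    have hφ0 : φ = 0 := by
      ext k
      simpa using congrFun hc k
    rw [hφ0, LinearMap.zero_apply]
  rw [hφ] at hx
  linear_combination hx

/-- The Plücker relation for an array `f` of moment rows and the array obtained from `f` by
dropping its first row. -/
theorem bordered_relation (f : ℕ → ℕ → ℂ) (y : ℕ → ℂ) (n : ℕ)
    (h : momentDet (fun j => f (j + 1)) (n + 1) ≠ 0) :
    borderedDet f y (n + 1) * momentDet (fun j => f (j + 1)) (n + 1) -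
      borderedDet (fun j => f (j + 1)) y (n + 1) * momentDet f (n + 1) =
    momentDet f (n + 2) * borderedDet (fun j => f (j + 1)) y n := by
  have hlast : ((Matrix.updateRow (Matrix.of fun j k : Fin (n + 2) => f (j + 1) k) (Fin.last (n + 1))
      (Pi.single (Fin.last (n + 1)) 1)).updateRow (Fin.last n).castSucc
        (fun k => y k)).det = borderedDet (fun j => f (j + 1)) y n := by
    rw [Matrix.updateRow_comm _ (Fin.castSucc_lt_last (Fin.last n)).ne',
      det_updateRow_last_single, ← det_updateRow_last_eq_borderedDet]
    congr 1
    ext j k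
    simp [Matrix.updateRow_apply]
  rw [← det_updateRow_last_single_eq_momentDet] at h
  have := plucker_rows (Matrix.of fun j k : Fin (n + 2) => f j k)
    (Matrix.of fun j k : Fin (n + 2) => f (j + 1) k)
    (fun i => rfl) (Pi.single (Fin.last _) 1) (fun k => y k) h
  rw [hlast, det_updateRow_last_eq_borderedDet, det_updateRow_last_single_eq_momentDet f,
    det_updateRow_last_single_eq_momentDet (fun j => f (j + 1)),
    det_updateRow_last_eq_borderedDet (fun j => f (j + 1))] at this
  exact this

/-- The two-term relation for an array `f` of moment rows, from which the four relations follow by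
choosing `f`. -/
theorem bordered_two_term (f g : ℕ → ℕ → ℂ) (y : ℕ → ℂ) (n : ℕ)
    (hg : ∀ j k, g j k = f (j + 1) k)
    (hf0 : ∀ m, momentDet f m ≠ 0) (hg0 : ∀ m, momentDet g m ≠ 0) :
    borderedDet f y (n + 1) / momentDet f (n + 1) =
      borderedDet g y (n + 1) / momentDet g (n + 1) +
        momentDet f (n + 2) / momentDet f (n + 1) / (momentDet g (n + 1) / momentDet g n) *
          (borderedDet g y n / momentDet g n) := by
  obtain rfl : g = fun j => f (j + 1) := funext fun j => funext (hg j)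
  have key := bordered_relation f y n (hg0 _)
  have h1 := hf0 (n + 1)
  have h2 := hg0 (n + 1)
  have h3 := hg0 n
  field_simp
  linear_combination key

theorem Ddet_eq_momentDet (w : ℤ → ℂ) (n : ℕ) (r : ℤ) :
    Ddet w n r = momentDet (fun j k => w (r + 2 * (j : ℤ) - (k : ℤ))) n := rfl

theorem Ddet_eq_momentDet_transpose (w : ℤ → ℂ) (n : ℕ) (r : ℤ) :
    Ddet w n r = momentDet (fun j k => w (r + 2 * (k : ℤ) - (j : ℤ))) n :=
  (Matrix.det_transpose _).symm

theorem Edet_eq_momentDet (w : ℤ → ℂ) (n : ℕ) (s : ℤ) :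
    Edet w n s = momentDet (fun j k => w (s + (j : ℤ) - 2 * (k : ℤ))) n := rfl

theorem Edet_eq_momentDet_transpose (w : ℤ → ℂ) (n : ℕ) (s : ℤ) :
    Edet w n s = momentDet (fun j k => w (s + (k : ℤ) - 2 * (j : ℤ))) n :=
  (Matrix.det_transpose _).symm

theorem Ppoly_eq (w : ℤ → ℂ) (n : ℕ) (r : ℤ) (z : ℂ) :
    Ppoly w n r z =
      borderedDet (fun j k => w (r + 2 * (j : ℤ) - (k : ℤ))) (fun k => z ^ k) n / Ddet w n r := rfl

theorem Qpoly_eq (w : ℤ → ℂ) (n : ℕ) (r : ℤ) (z : ℂ) :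
    Qpoly w n r z =
      borderedDet (fun j k => w (r + 2 * (k : ℤ) - (j : ℤ))) (fun k => z ^ k) n / Ddet w n r :=
  congrArg (· / Ddet w n r) (Matrix.det_transpose _).symm

theorem Rpoly_eq (w : ℤ → ℂ) (n : ℕ) (s : ℤ) (z : ℂ) :
    Rpoly w n s z =
      borderedDet (fun j k => w (s + (j : ℤ) - 2 * (k : ℤ))) (fun k => z ^ k) n / Edet w n s := rfl

theorem Spoly_eq (w : ℤ → ℂ) (n : ℕ) (s : ℤ) (z : ℂ) :
    Spoly w n s z =
      borderedDet (fun j k => w (s + (k : ℤ) - 2 * (j : ℤ))) (fun k => z ^ k) n / Edet w n s :=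
  congrArg (· / Edet w n s) (Matrix.det_transpose _).symm

/-- Two-term relations linking bi-orthogonal polynomials at different offsets
(the case `n ≥ 1`, written with index `n+1`). -/
theorem stmt19 (w : ℤ → ℂ)
    (hD : ∀ (m : ℕ) (ρ : ℤ), Ddet w m ρ ≠ 0)
    (hE : ∀ (m : ℕ) (σ : ℤ), Edet w m σ ≠ 0)
    (n : ℕ) (r s : ℤ) (z : ℂ) :
    Ppoly w (n + 1) r z =
      Ppoly w (n + 1) (r + 2) z + hnorm w (n + 1) r / hnorm w n (r + 2) * Ppoly w n (r + 2) z ∧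
    Qpoly w (n + 1) r z =
      Qpoly w (n + 1) (r - 1) z + hnorm w (n + 1) r / hnorm w n (r - 1) * Qpoly w n (r - 1) z ∧
    Rpoly w (n + 1) s z =
      Rpoly w (n + 1) (s + 1) z + gnorm w (n + 1) s / gnorm w n (s + 1) * Rpoly w n (s + 1) z ∧
    Spoly w (n + 1) s z =
      Spoly w (n + 1) (s - 2) z + gnorm w (n + 1) s / gnorm w n (s - 2) * Spoly w n (s - 2) z := by
  refine ⟨?_, ?_, ?_, ?_⟩
  · simp only [Ppoly_eq, hnorm, Ddet_eq_momentDet]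
    refine bordered_two_term _ _ _ _ (fun j k => congrArg w (by push_cast; ring))
      (fun m => ?_) (fun m => ?_)
    · rw [← Ddet_eq_momentDet]; exact hD _ _
    · rw [← Ddet_eq_momentDet]; exact hD _ _
  · simp only [Qpoly_eq, hnorm, Ddet_eq_momentDet_transpose]
    refine bordered_two_term _ _ _ _ (fun j k => congrArg w (by push_cast; ring))
      (fun m => ?_) (fun m => ?_)
    · rw [← Ddet_eq_momentDet_transpose]; exact hD _ _
    · rw [← Ddet_eq_momentDet_transpose]; exact hD _ _
  · simp only [Rpoly_eq, gnorm, Edet_eq_momentDet]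
    refine bordered_two_term _ _ _ _ (fun j k => congrArg w (by push_cast; ring))
      (fun m => ?_) (fun m => ?_)
    · rw [← Edet_eq_momentDet]; exact hE _ _
    · rw [← Edet_eq_momentDet]; exact hE _ _
  · simp only [Spoly_eq, gnorm, Edet_eq_momentDet_transpose]
    refine bordered_two_term _ _ _ _ (fun j k => congrArg w (by push_cast; ring))
      (fun m => ?_) (fun m => ?_)
    · rw [← Edet_eq_momentDet_transpose]; exact hE _ _
    · rw [← Edet_eq_momentDet_transpose]; exact hE _ _
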